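/- Assume (Σ_n, T, (φ_n)) satisfies property (H*), that there exists an invariant sequence (μ_k) of Borel probability measures (i.e. ℒ*_k(μ_{k+1}) = μ_k for all k ∈ ℕ₀), and that the integers n_k can be chosen so that sup_k t_k < 1. Then the invariant sequence (μ_k) is unique: any two sequences (μ_k), (ν_k) of Borel probability measures with ℒ*_k(μ_{k+1}) = μ_k and ℒ*_k(ν_{k+1}) = ν_k for all k satisfy μ_k = ν_k for all k. -/

import Mathlib

open MeasureTheory Real Filter

namespace NSShift

/-- The ambient sequence space `ℕ^ℕ`. -/
abbrev Seq := ℕ → ℕ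

/-- The shift map `T`. -/
def shift (x : Seq) : Seq := fun i => x (i + 1)

/-- Prepend one symbol to a sequence. -/
def cons (a : ℕ) (x : Seq) : Seq := fun i =>
  match i with
  | 0 => a
  | j + 1 => x j

/-- The non-stationary shift space `Σ_n` determined by alphabets `W` and
transition relations `A` (`A n i j` means `α^n_{ij} = 1`). -/
def Sig (W : ℕ → Set ℕ) (A : ℕ → ℕ → ℕ → Prop) (n : ℕ) : Set Seq :=
  {x | (∀ i, x i ∈ W (n + i)) ∧ ∀ i, A (n + i) (x i) (x (i + 1))}

/-- `x` and `y` agree in their first `k` coordinates (lie in a common `k`-cylinder). -/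
def agrees (x y : Seq) (k : ℕ) : Prop := ∀ i < k, x i = y i

open scoped Classical in
/-- The shift metric `d_r(x,y) = r^{min{i : x_i ≠ y_i}}`. -/
noncomputable def dr (r : ℝ) (x y : Seq) : ℝ :=
  if x = y then 0 else r ^ sInf {i | x i ≠ y i}

/-- `f` is locally `(r,m)`-Hölder continuous with Hölder constant `κ` of index `m` on `S`:
`V_k(f) ≤ κ r^k` for all `k ≥ m`. -/
def HolderOn (S : Set Seq) (r κ : ℝ) (m : ℕ) (f : Seq → ℝ) : Prop :=
  ∀ k, m ≤ k → ∀ x ∈ S, ∀ y ∈ S, agrees x y k → |f x - f y| ≤ κ * r ^ k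

/-- The Birkhoff sum `S_n(φ_k) = Σ_{i=0}^{n-1} φ_{k+i} ∘ T^i`. -/
noncomputable def birkhoff (φ : ℕ → Seq → ℝ) (k n : ℕ) (x : Seq) : ℝ :=
  ∑ i ∈ Finset.range n, φ (k + i) (shift^[i] x)

/-- `log B_m = Σ_{i=1}^{m} κ_{m−i} r^i`. -/
noncomputable def logB (κ : ℕ → ℝ) (r : ℝ) (m : ℕ) : ℝ :=
  ∑ i ∈ Finset.Icc 1 m, κ (m - i) * r ^ i

/-- `B_m = exp Σ_{i=1}^{m} κ_{m−i} r^i`. -/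
noncomputable def Bconst (κ : ℕ → ℝ) (r : ℝ) (m : ℕ) : ℝ := Real.exp (logB κ r m)


open scoped Classical in
/-- The Ruelle operator `ℒ_k(f)(x) = Σ_{Ty=x} e^{φ_k(y)} f(y)`, for `x ∈ Σ_{k+1}`. -/
noncomputable def Ruelle (W : ℕ → Set ℕ) (A : ℕ → ℕ → ℕ → Prop) (φ : ℕ → Seq → ℝ)
    (k : ℕ) (f : Seq → ℝ) (x : Seq) : ℝ :=
  ∑' a : ℕ, if cons a x ∈ Sig W A k then Real.exp (φ k (cons a x)) * f (cons a x) else 0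

/-- The iterated Ruelle operator `ℒ^n_k = ℒ_{k+n-1} ∘ ⋯ ∘ ℒ_k`. -/
noncomputable def RuelleIter (W : ℕ → Set ℕ) (A : ℕ → ℕ → ℕ → Prop) (φ : ℕ → Seq → ℝ)
    (k : ℕ) : ℕ → (Seq → ℝ) → Seq → ℝ
  | 0 => fun f => f
  | n + 1 => fun f => Ruelle W A φ (k + n) (RuelleIter W A φ k n f)

/-- `w` is a `k`-admissible word of length `len`. -/
def Adm (W : ℕ → Set ℕ) (A : ℕ → ℕ → ℕ → Prop) (k : ℕ) (w : ℕ → ℕ) (len : ℕ) : Prop :=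
  (∀ i < len, w i ∈ W (k + i)) ∧ ∀ i, i + 1 < len → A (k + i) (w i) (w (i + 1))

/-- Prepend the first `len` symbols of `w` to the sequence `x` (the inverse branch `τ_w`). -/
def prepend (w : ℕ → ℕ) (len : ℕ) (x : Seq) : Seq := fun i =>
  if i < len then w i else x (i - len)

/-- The Lipschitz constant of `f` on `S` with respect to the distance function `d`,
as the least constant `K ≥ 0` with `|f x − f y| ≤ K d(x,y)` on `S`. -/
noncomputable def LipC (S : Set Seq) (d : Seq → Seq → ℝ) (f : Seq → ℝ) : ℝ :=
  sInf {K : ℝ | 0 ≤ K ∧ ∀ x ∈ S, ∀ y ∈ S, |f x - f y| ≤ K * d x y}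

/-- The Vasershtein (Wasserstein) distance of two Borel measures with respect to the
cost function `d`, as the infimum of `∫ d dm` over couplings `m`. -/
noncomputable def Wass (d : Seq → Seq → ℝ) (μ ν : Measure Seq) : ℝ :=
  sInf {t : ℝ | ∃ m : Measure (Seq × Seq),
    m.map Prod.fst = μ ∧ m.map Prod.snd = ν ∧ t = ∫ p, d p.1 p.2 ∂m}

/-- The dual Ruelle operator `ℒ^*_k` on Borel measures, satisfying
`∫ f d(ℒ^*_k μ) = ∫ ℒ_k(f) dμ`. -/
noncomputable def dualRuelle (W : ℕ → Set ℕ) (A : ℕ → ℕ → ℕ → Prop) (φ : ℕ → Seq → ℝ)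
    (k : ℕ) (μ : Measure Seq) : Measure Seq :=
  Measure.sum fun a : ℕ =>
    (μ.withDensity fun x =>
      ENNReal.ofReal ((Sig W A k).indicator (fun y => Real.exp (φ k y)) (cons a x))).map (cons a)

/-- The iterated dual operator `(ℒ^n_k)^* = ℒ^*_k ∘ ⋯ ∘ ℒ^*_{k+n-1}`. -/
noncomputable def dualRuelleIter (W : ℕ → Set ℕ) (A : ℕ → ℕ → ℕ → Prop) (φ : ℕ → Seq → ℝ) :
    (k : ℕ) → ℕ → Measure Seq → Measure Seq
  | _, 0, μ => μ
  | k, n + 1, μ => dualRuelle W A φ k (dualRuelleIter W A φ (k + 1) n μ)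

/-- A non-stationary shift space `((Σ_n), T, (φ_n))` satisfying property `(H*)`, together
with the choices of the constants `β`, `n_k`, base letters `o_k`, mixing times `m_k`,
connecting words `u(x)` and lower bounds `C_k` used in the coupling construction. -/
structure HstarSystem where
  /-- the alphabets `𝒲¹_n` -/
  W : ℕ → Set ℕ
  /-- the transition matrices: `A n i j` iff `α^n_{ij} = 1` -/
  A : ℕ → ℕ → ℕ → Prop
  /-- the potentials `φ_n : Σ_n → ℝ` -/
  φ : ℕ → Seq → ℝ
  /-- the Hölder parameter -/
  r : ℝ
  /-- the parameter `β ∈ (0,1)` -/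
  β : ℝ
  /-- the Hölder constants `κ_n` of `φ_n` -/
  κ : ℕ → ℝ
  /-- the finite set `ℐ` from the big preimages property -/
  I : Finset ℕ
  /-- the infinite set `𝒦` from the big preimages property -/
  K : Set ℕ
  /-- the base letters `o_k ∈ 𝒲¹_k` -/
  o : ℕ → ℕ
  /-- the integers `n_k` -/
  nseq : ℕ → ℕ
  /-- the mixing times `m_k` -/
  mseq : ℕ → ℕ
  /-- the connecting words `u(x) ∈ 𝒲^{m_k}_k` (as sequences; only the first `m_k`
  symbols are relevant) -/
  u : ℕ → Seq → Seq
  /-- the constants `C_k` -/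
  Cseq : ℕ → ℝ
  hr : 0 < r ∧ r < 1
  hβ : 0 < β ∧ β < 1
  κnonneg : ∀ n, 0 ≤ κ n
  hKinf : K.Infinite
  /-- no zero rows -/
  row : ∀ n, ∀ i ∈ W n, ∃ j ∈ W (n + 1), A n i j
  /-- no zero columns -/
  col : ∀ n, ∀ i ∈ W (n + 1), ∃ j ∈ W n, A n j i
  /-- topological mixing -/
  mixing : ∀ k : ℕ, ∀ a ∈ W k, ∀ b : ℕ, ∃ N : ℕ, ∀ n, N ≤ n → b ∈ W (k + n) →
    ∃ x ∈ Sig W A k, x 0 = a ∧ x n = b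
  /-- big preimages along `𝒦` -/
  bigPre : ∀ n ∈ K, 1 ≤ n → ∀ a ∈ W n, ∃ b ∈ I, (b : ℕ) ∈ W (n - 1) ∧ A (n - 1) b a
  /-- `ℒ_n(1) = 1` -/
  normalized : ∀ k, ∀ x ∈ Sig W A (k + 1), Ruelle W A φ k (fun _ => 1) x = 1
  /-- `φ_n` is locally `(r,2)`-Hölder for `n ∉ 𝒦` -/
  holder2 : ∀ n ∉ K, HolderOn (Sig W A n) r (κ n) 2 (φ n)
  /-- `φ_n` is locally `(r,1)`-Hölder for `n ∈ 𝒦` -/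
  holder1 : ∀ n ∈ K, HolderOn (Sig W A n) r (κ n) 1 (φ n)
  ho : ∀ k, o k ∈ W k
  /-- `n_k ≥ ⌊−log α_k / log r⌋ + 1` where `α_k = B_k/β` -/
  hn : ∀ k, (⌊-Real.log (Bconst κ r k / β) / Real.log r⌋ + 1 : ℤ) ≤ (nseq k : ℤ)
  /-- `m_k ≥ 1`, `k + m_k ∈ 𝒦` -/
  hm_mem : ∀ k, 1 ≤ mseq k ∧ k + mseq k ∈ K
  /-- `(A_k ⋯ A_{k+m_k−2})_{o_k j} ≥ 1` for all `j ∈ ℐ ∩ 𝒲¹_{k+m_k−1}` -/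
  hm_conn : ∀ k, ∀ j ∈ I, (j : ℕ) ∈ W (k + mseq k - 1) →
    ∃ w : ℕ → ℕ, Adm W A k w (mseq k) ∧ w 0 = o k ∧ w (mseq k - 1) = j
  /-- minimality of `m_k` -/
  hm_min : ∀ k n, (1 ≤ n ∧ k + n ∈ K ∧ ∀ j ∈ I, (j : ℕ) ∈ W (k + n - 1) →
      ∃ w : ℕ → ℕ, Adm W A k w n ∧ w 0 = o k ∧ w (n - 1) = j) → mseq k ≤ n
  /-- the connecting word `u(x)` starts at `o_k`, ends in `ℐ`, and
  `x ∈ T^{m_k}([u(x)]_k)` -/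
  hu : ∀ k, ∀ x ∈ Sig W A (k + mseq k), prepend (u k x) (mseq k) x ∈ Sig W A k ∧
    u k x 0 = o k ∧ u k x (mseq k - 1) ∈ I
  hC_pos : ∀ k, 0 < Cseq k
  /-- `C_k` is a lower bound for `e^{S_{m_k} φ_k (τ_{u(x)} x)}` -/
  hC_le : ∀ k, ∀ x ∈ Sig W A (k + mseq k),
    Cseq k ≤ Real.exp (birkhoff φ k (mseq k) (prepend (u k x) (mseq k) x))

namespace HstarSystem

variable (S : HstarSystem)

/-- `α_k := B_k / β`. -/
noncomputable def alphaC (k : ℕ) : ℝ := Bconst S.κ S.r k / S.β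

/-- the metric `d̄_k(x,y) := min{1, α_k d_r(x,y)}`. -/
noncomputable def dbar (k : ℕ) (x y : Seq) : ℝ := min 1 (S.alphaC k * dr S.r x y)

/-- `s_k := 1 − (1 − r^{n_k} α_k) C_{k+n_k}/B_{k+n_k}`. -/
noncomputable def sconst (k : ℕ) : ℝ :=
  1 - (1 - S.r ^ S.nseq k * S.alphaC k) * S.Cseq (k + S.nseq k) / Bconst S.κ S.r (k + S.nseq k)

/-- `t_k := max{β, s_k}`. -/
noncomputable def tconst (k : ℕ) : ℝ := max S.β (S.sconst k)

/-- `l_k := n_k + m_{k+n_k}`. -/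
def lconst (k : ℕ) : ℕ := S.nseq k + S.mseq (k + S.nseq k)

end HstarSystem

/-!
Put `l = n_k + m_{k+n_k}`. The iterate `ℒ_k^l` multiplies Lipschitz constants, taken with respect to
the truncated metrics `d̄_k = min {1, α_k d_r}`, by at most `t = sup_k t_k`.

* Nearby points: bounded distortion compares the branches through `x` and `y` up to a factor
  `exp (r^p log B)`, and convexity of `exp` bounds this by `1 + r^p (B - 1)`. Passing from `B` to
  `α = B/β` gains the factor `β`.
* Far points: a mass `C` can be transported along branches which all start with the letter `o`. The
  values of the `n_k`-th iterate at points with a common first letter differ by at most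
  `1 - (1 - r^{n_k} α_k)/B` times the Lipschitz constant, again by distortion.

Integrating the iterates of `f` against two invariant sequences therefore shows that
`∫ f dμ_k - ∫ f dν_k` is at most `t^j` times the Lipschitz constant of `f`, for every `j`. Hence it
vanishes, and indicators of cylinder sets are Lipschitz and determine the measures.
-/

open scoped Topology

section Sequences

variable {W : ℕ → Set ℕ} {A : ℕ → ℕ → ℕ → Prop} {r : ℝ} {x y : Seq} {k p : ℕ}

theorem cons_shift (x : Seq) : cons (x 0) (shift x) = x := by
  funext i
  cases i <;> rfl

theorem cons_mem_Sig_iff {a : ℕ} :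
    cons a x ∈ Sig W A k ↔ a ∈ W k ∧ A k a (x 0) ∧ x ∈ Sig W A (k + 1) := by
  have hW : (∀ i, cons a x i ∈ W (k + i)) ↔ a ∈ W k ∧ ∀ i, x i ∈ W (k + 1 + i) := by
    rw [← Nat.and_forall_add_one]
    simp only [cons, add_zero, add_assoc, add_comm 1]
  have hA : (∀ i, A (k + i) (cons a x i) (cons a x (i + 1))) ↔
      A k a (x 0) ∧ ∀ i, A (k + 1 + i) (x i) (x (i + 1)) := by
    rw [← Nat.and_forall_add_one]
    simp only [cons, add_zero, add_assoc, add_comm 1]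
  simp only [Sig, Set.mem_ofPred_eq, hW, hA]
  tauto

theorem cons_mem_Sig_of_agrees {a : ℕ} (hp : 1 ≤ p) (hxy : agrees x y p)
    (hax : cons a x ∈ Sig W A k) (hy : y ∈ Sig W A (k + 1)) : cons a y ∈ Sig W A k := by
  obtain ⟨ha, hA, -⟩ := cons_mem_Sig_iff.1 hax
  exact cons_mem_Sig_iff.2 ⟨ha, hxy 0 hp ▸ hA, hy⟩

theorem shift_mem_Sig (hx : x ∈ Sig W A k) : shift x ∈ Sig W A (k + 1) := by
  rw [← cons_shift x, cons_mem_Sig_iff] at hx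
  exact hx.2.2

theorem iterate_shift_mem_Sig (hx : x ∈ Sig W A k) (n : ℕ) : shift^[n] x ∈ Sig W A (k + n) := by
  induction n with
  | zero => exact hx
  | succ n ih =>
    rw [Function.iterate_succ_apply']
    exact shift_mem_Sig ih

theorem iterate_shift_apply (x : Seq) (n i : ℕ) : (shift^[n] x) i = x (n + i) := by
  induction n generalizing i with
  | zero => simp
  | succ n ih =>
    rw [Function.iterate_succ_apply', shift, ih]
    congr 1
    omega

theorem iterate_shift_prepend (w : ℕ → ℕ) (n : ℕ) (x : Seq) : shift^[n] (prepend w n x) = x := by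
  funext i
  simp [iterate_shift_apply, prepend]

theorem agrees.cons (h : agrees x y p) (a : ℕ) : agrees (cons a x) (cons a y) (p + 1)
  | 0, _ => rfl
  | i + 1, hi => h i (Nat.lt_of_succ_lt_succ hi)

theorem dr_comm (r : ℝ) (x y : Seq) : dr r x y = dr r y x := by
  rcases eq_or_ne x y with rfl | hxy
  · rfl
  · simp only [dr, if_neg hxy, if_neg hxy.symm, ne_comm]

theorem exists_dr_eq_pow (r : ℝ) (hxy : x ≠ y) : ∃ p, agrees x y p ∧ dr r x y = r ^ p :=
  ⟨sInf {i | x i ≠ y i}, fun _ hi => not_not.1 (Nat.notMem_of_lt_sInf hi), if_neg hxy⟩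

theorem dr_nonneg (hr : 0 ≤ r) (x y : Seq) : 0 ≤ dr r x y := by
  unfold dr
  split_ifs <;> positivity

theorem dr_le_pow (hr₀ : 0 ≤ r) (hr₁ : r ≤ 1) (h : agrees x y p) : dr r x y ≤ r ^ p := by
  unfold dr
  split_ifs with hxy
  · positivity
  · refine pow_le_pow_of_le_one hr₀ hr₁ (le_of_not_gt fun hlt => ?_)
    exact Nat.sInf_mem (Function.ne_iff.1 hxy) (h _ hlt)

theorem HolderOn.continuousOn {S : Set Seq} {κ : ℝ} {m : ℕ} {f : Seq → ℝ} (hr₀ : 0 ≤ r)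
    (hr₁ : r < 1) (hf : HolderOn S r κ m f) : ContinuousOn f S := by
  intro x hx
  rw [ContinuousWithinAt, Metric.tendsto_nhds]
  intro ε hε
  have hlim : Tendsto (fun n : ℕ => κ * r ^ n) atTop (𝓝 0) := by
    simpa using (tendsto_pow_atTop_nhds_zero_of_lt_one hr₀ hr₁).const_mul κ
  obtain ⟨n, hn, hmn⟩ := ((hlim.eventually_lt_const hε).and (eventually_ge_atTop m)).exists
  have hcyl : PiNat.cylinder x n ∈ 𝓝 x :=
    (PiNat.isOpen_cylinder _ x n).mem_nhds (PiNat.self_mem_cylinder x n)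
  filter_upwards [nhdsWithin_le_nhds hcyl, self_mem_nhdsWithin] with y hy hyS
  exact (hf n hmn y hyS x hx hy).trans_lt hn

end Sequences

section Lipschitz

variable {S : Set Seq} {r α D : ℝ} {f : Seq → ℝ}

/-- `f` is Lipschitz on `S` with constant `D` for the cost `d`, typically some `d̄_k`. -/
def LipOn (S : Set Seq) (d : Seq → Seq → ℝ) (D : ℝ) (f : Seq → ℝ) : Prop :=
  ∀ x ∈ S, ∀ y ∈ S, |f x - f y| ≤ D * d x y

/-- The truncated metric `min {1, α d_r}`, which is `d̄_k` when `α = α_k`. -/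
noncomputable def truncDist (r α : ℝ) (x y : Seq) : ℝ := min 1 (α * dr r x y)

theorem truncDist_comm (r α : ℝ) (x y : Seq) : truncDist r α x y = truncDist r α y x := by
  rw [truncDist, dr_comm, truncDist]

theorem truncDist_le_one (r α : ℝ) (x y : Seq) : truncDist r α x y ≤ 1 :=
  min_le_left _ _

theorem truncDist_nonneg (hr : 0 ≤ r) (hα : 0 ≤ α) (x y : Seq) : 0 ≤ truncDist r α x y :=
  le_min zero_le_one (mul_nonneg hα (dr_nonneg hr x y))

theorem LipOn.sub_const {d : Seq → Seq → ℝ} (hf : LipOn S d D f) (c : ℝ) :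
    LipOn S d D (fun x => f x - c) := fun x hx y hy => by
  simpa only [sub_sub_sub_cancel_right] using hf x hx y hy

theorem LipOn.holderOn (hr₀ : 0 ≤ r) (hr₁ : r ≤ 1) (hα : 0 ≤ α) (hD : 0 ≤ D)
    (hf : LipOn S (truncDist r α) D f) (m : ℕ) : HolderOn S r (D * α) m f := by
  intro p _ x hx y hy hxy
  calc |f x - f y| ≤ D * truncDist r α x y := hf x hx y hy
    _ ≤ D * (α * r ^ p) := by
      gcongr
      exact (min_le_right _ _).trans (by gcongr; exact dr_le_pow hr₀ hr₁ hxy)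
    _ = D * α * r ^ p := by ring

theorem lipOn_truncDist_of_sub_le (hr : 0 ≤ r) (hα : 1 ≤ α) (hD : 0 ≤ D)
    (hfar : ∀ x ∈ S, ∀ y ∈ S, f x - f y ≤ D)
    (hnear : ∀ p, 1 ≤ p → ∀ x ∈ S, ∀ y ∈ S, agrees x y p → f x - f y ≤ D * (α * r ^ p)) :
    LipOn S (truncDist r α) D f := by
  have key : ∀ x ∈ S, ∀ y ∈ S, f x - f y ≤ D * truncDist r α x y := by
    intro x hx y hy
    rcases eq_or_ne x y with rfl | hxy
    · rw [sub_self]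
      exact mul_nonneg hD (truncDist_nonneg hr (zero_le_one.trans hα) x x)
    obtain ⟨p, hp, hdr⟩ := exists_dr_eq_pow r hxy
    rw [truncDist, hdr, mul_min_of_nonneg _ _ hD, mul_one]
    refine le_min (hfar x hx y hy) ?_
    rcases Nat.eq_zero_or_pos p with rfl | hp₁
    · rw [pow_zero, mul_one]
      exact (hfar x hx y hy).trans (le_mul_of_one_le_right hD hα)
    · exact hnear p hp₁ x hx y hy hp
  intro x hx y hy
  exact abs_sub_le_iff.2 ⟨key x hx y hy, truncDist_comm r α y x ▸ key y hy x hx⟩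

theorem lipOn_truncDist_of_agrees {p : ℕ} (hr₀ : 0 < r) (hr₁ : r ≤ 1) (hα : 1 ≤ α)
    (hf : ∀ x y, agrees x y p → f x = f y) (hosc : ∀ x y, f x - f y ≤ 1) (S : Set Seq) :
    LipOn S (truncDist r α) (r ^ p)⁻¹ f := by
  have hrp : 0 < r ^ p := pow_pos hr₀ p
  refine lipOn_truncDist_of_sub_le hr₀.le hα (by positivity)
    (fun x _ y _ => (hosc x y).trans ((one_le_inv₀ hrp).2 (pow_le_one₀ hr₀.le hr₁))) ?_
  intro q _ x _ y _ hxy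
  rcases le_total p q with hpq | hqp
  · rw [hf x y fun i hi => hxy i (hi.trans_le hpq), sub_self]
    positivity
  · calc f x - f y ≤ (r ^ p)⁻¹ * (1 * r ^ p) := by
          rw [one_mul, inv_mul_cancel₀ hrp.ne']
          exact hosc x y
      _ ≤ (r ^ p)⁻¹ * (α * r ^ q) := by
          gcongr ?_ * (?_ * ?_)
          exact pow_le_pow_of_le_one hr₀.le hr₁ hqp

theorem exists_mapsTo_Icc_of_sub_le (h : ∀ x ∈ S, ∀ y ∈ S, f x - f y ≤ D) :
    ∃ c, Set.MapsTo f S (Set.Icc c (c + D)) := by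
  rcases S.eq_empty_or_nonempty with rfl | ⟨x₀, hx₀⟩
  · exact ⟨0, Set.mapsTo_empty f _⟩
  have hbdd : BddBelow (f '' S) := by
    refine ⟨f x₀ - D, ?_⟩
    rintro _ ⟨y, hy, rfl⟩
    linarith [h x₀ hx₀ y hy]
  refine ⟨sInf (f '' S), fun x hx => ⟨csInf_le hbdd ⟨x, hx, rfl⟩, ?_⟩⟩
  have hle : f x - D ≤ sInf (f '' S) := by
    refine le_csInf ⟨f x₀, x₀, hx₀, rfl⟩ ?_
    rintro _ ⟨y, hy, rfl⟩
    linarith [h x hx y hy]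
  linarith

theorem LipOn.exists_mapsTo_Icc {d : Seq → Seq → ℝ} (hd : ∀ x y, d x y ≤ 1) (hD : 0 ≤ D)
    (hf : LipOn S d D f) : ∃ c, Set.MapsTo f S (Set.Icc c (c + D)) :=
  exists_mapsTo_Icc_of_sub_le fun x hx y hy =>
    (le_abs_self _).trans ((hf x hx y hy).trans (mul_le_of_le_one_right hD (hd x y)))

end Lipschitz

section RuelleOperator

variable {W : ℕ → Set ℕ} {A : ℕ → ℕ → ℕ → Prop} {φ : ℕ → Seq → ℝ} {k n : ℕ} {f g : Seq → ℝ}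
  {a b : ℝ} {x : Seq}

/-- The normalization `ℒ_k(1) = 1` on `Σ_{k+1}`, for all `k`. -/
def IsNormalized (W : ℕ → Set ℕ) (A : ℕ → ℕ → ℕ → Prop) (φ : ℕ → Seq → ℝ) : Prop :=
  ∀ k, ∀ x ∈ Sig W A (k + 1), Ruelle W A φ k (fun _ => 1) x = 1

/-- The weight `e^{φ_k}` on `Σ_k`, extended by zero, so that `ℒ_k` becomes an unrestricted sum over
all letters. -/
noncomputable def weight (W : ℕ → Set ℕ) (A : ℕ → ℕ → ℕ → Prop) (φ : ℕ → Seq → ℝ) (k : ℕ) :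
    Seq → ℝ :=
  (Sig W A k).indicator fun y => Real.exp (φ k y)

theorem weight_nonneg (k : ℕ) (x : Seq) : 0 ≤ weight W A φ k x :=
  Set.indicator_nonneg (fun _ _ => (Real.exp_pos _).le) x

theorem weight_of_mem (hx : x ∈ Sig W A k) : weight W A φ k x = Real.exp (φ k x) :=
  Set.indicator_of_mem hx _

theorem weight_of_notMem (hx : x ∉ Sig W A k) : weight W A φ k x = 0 :=
  Set.indicator_of_notMem hx _

theorem Ruelle_eq_tsum_weight (k : ℕ) (f : Seq → ℝ) (x : Seq) :
    Ruelle W A φ k f x = ∑' i, weight W A φ k (cons i x) * f (cons i x) := by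
  refine tsum_congr fun i => ?_
  split_ifs with hmem
  · rw [weight_of_mem hmem]
  · rw [weight_of_notMem hmem, zero_mul]

theorem weight_mul_le_weight_mul (h : ∀ z ∈ Sig W A k, f z ≤ g z) (z : Seq) :
    weight W A φ k z * f z ≤ weight W A φ k z * g z := by
  by_cases hz : z ∈ Sig W A k
  · exact mul_le_mul_of_nonneg_left (h z hz) (weight_nonneg k z)
  · simp only [weight_of_notMem hz, zero_mul, le_refl]

theorem Ruelle_congr (h : Set.EqOn f g (Sig W A k)) : Ruelle W A φ k f = Ruelle W A φ k g := by
  funext x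
  simp only [Ruelle_eq_tsum_weight]
  exact tsum_congr fun i => le_antisymm (weight_mul_le_weight_mul (fun z hz => (h hz).le) _)
    (weight_mul_le_weight_mul (fun z hz => (h hz).ge) _)

theorem RuelleIter_succ (k n : ℕ) (f : Seq → ℝ) :
    RuelleIter W A φ k (n + 1) f = Ruelle W A φ (k + n) (RuelleIter W A φ k n f) :=
  rfl

theorem RuelleIter_add (k n m : ℕ) (f : Seq → ℝ) :
    RuelleIter W A φ k (n + m) f = RuelleIter W A φ (k + n) m (RuelleIter W A φ k n f) := by
  induction m with
  | zero => rfl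
  | succ m ih => rw [← add_assoc, RuelleIter_succ, RuelleIter_succ, ih, add_assoc]

variable (hN : IsNormalized W A φ)

include hN

theorem IsNormalized.hasSum_weight (hx : x ∈ Sig W A (k + 1)) :
    HasSum (fun i => weight W A φ k (cons i x)) 1 := by
  have htsum : ∑' i, weight W A φ k (cons i x) = 1 := by
    simpa only [Ruelle_eq_tsum_weight, mul_one] using hN k x hx
  have hsummable : Summable fun i => weight W A φ k (cons i x) := by
    by_contra h
    exact one_ne_zero (htsum.symm.trans (tsum_eq_zero_of_not_summable h))
  exact htsum ▸ hsummable.hasSum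

theorem IsNormalized.hasSum_Ruelle (hf : Set.MapsTo f (Sig W A k) (Set.Icc a b))
    (hx : x ∈ Sig W A (k + 1)) :
    HasSum (fun i => weight W A φ k (cons i x) * f (cons i x)) (Ruelle W A φ k f x) := by
  rw [Ruelle_eq_tsum_weight]
  refine (Summable.of_norm_bounded ((hN.hasSum_weight hx).summable.mul_right (max |a| |b|))
    fun i => ?_).hasSum
  rw [norm_mul, Real.norm_of_nonneg (weight_nonneg k _)]
  exact weight_mul_le_weight_mul (fun z hz => abs_le_max_abs_abs (hf hz).1 (hf hz).2) _

theorem IsNormalized.mapsTo_Ruelle (hf : Set.MapsTo f (Sig W A k) (Set.Icc a b)) :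
    Set.MapsTo (Ruelle W A φ k f) (Sig W A (k + 1)) (Set.Icc a b) := fun x hx => by
  have hconst (c : ℝ) : HasSum (fun i => weight W A φ k (cons i x) * c) c := by
    simpa only [one_mul] using (hN.hasSum_weight hx).mul_right c
  have hsum := hN.hasSum_Ruelle hf hx
  exact ⟨hasSum_le (fun i => weight_mul_le_weight_mul (fun z hz => (hf hz).1) _) (hconst a) hsum,
    hasSum_le (fun i => weight_mul_le_weight_mul (fun z hz => (hf hz).2) _) hsum (hconst b)⟩

theorem IsNormalized.mapsTo_RuelleIter (hf : Set.MapsTo f (Sig W A k) (Set.Icc a b)) (n : ℕ) :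
    Set.MapsTo (RuelleIter W A φ k n f) (Sig W A (k + n)) (Set.Icc a b) := by
  induction n with
  | zero => exact hf
  | succ n ih => exact hN.mapsTo_Ruelle ih

theorem IsNormalized.Ruelle_affine (hf : Set.MapsTo f (Sig W A k) (Set.Icc a b)) (c d : ℝ)
    (hx : x ∈ Sig W A (k + 1)) :
    Ruelle W A φ k (fun z => c * f z + d) x = c * Ruelle W A φ k f x + d := by
  have hsum := ((hN.hasSum_Ruelle hf hx).mul_left c).add ((hN.hasSum_weight hx).mul_right d)
  rw [Ruelle_eq_tsum_weight, ← one_mul d, ← hsum.tsum_eq]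
  exact tsum_congr fun i => by ring

theorem IsNormalized.RuelleIter_affine (hf : Set.MapsTo f (Sig W A k) (Set.Icc a b)) (c d : ℝ)
    (n : ℕ) : Set.EqOn (RuelleIter W A φ k n fun z => c * f z + d)
      (fun x => c * RuelleIter W A φ k n f x + d) (Sig W A (k + n)) := by
  induction n with
  | zero => exact Set.eqOn_refl _ _
  | succ n ih =>
    intro x hx
    rw [RuelleIter_succ, Ruelle_congr ih, hN.Ruelle_affine (hN.mapsTo_RuelleIter hf n) c d hx]
    rfl

theorem IsNormalized.exp_birkhoff_mul_le (hf : Set.MapsTo f (Sig W A k) (Set.Icc 0 b))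
    (hx : x ∈ Sig W A k) (n : ℕ) :
    Real.exp (birkhoff φ k n x) * f x ≤ RuelleIter W A φ k n f (shift^[n] x) := by
  induction n with
  | zero => simp [birkhoff, RuelleIter]
  | succ n ih =>
    have hmem := iterate_shift_mem_Sig hx n
    have hmaps := hN.mapsTo_RuelleIter hf n
    have hnonneg (z : Seq) : 0 ≤ weight W A φ (k + n) z * RuelleIter W A φ k n f z := by
      simpa only [mul_zero] using weight_mul_le_weight_mul (fun z hz => (hmaps hz).1) z
    have hterm := le_hasSum (hN.hasSum_Ruelle hmaps (shift_mem_Sig hmem)) ((shift^[n] x) 0)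
      fun i _ => hnonneg _
    rw [cons_shift, weight_of_mem hmem] at hterm
    rw [Function.iterate_succ_apply', birkhoff, Finset.sum_range_succ, Real.exp_add,
      mul_comm (Real.exp _), mul_assoc]
    exact (mul_le_mul_of_nonneg_left ih (Real.exp_pos _).le).trans hterm

end RuelleOperator

section Distortion

variable {W : ℕ → Set ℕ} {A : ℕ → ℕ → ℕ → Prop} {φ : ℕ → Seq → ℝ} {κ : ℕ → ℝ} {r D : ℝ}
  {k n p : ℕ} {f g : Seq → ℝ} {x y : Seq}

theorem logB_succ (κ : ℕ → ℝ) (r : ℝ) (m : ℕ) : logB κ r (m + 1) = r * (logB κ r m + κ m) := by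
  have hrange (m : ℕ) : logB κ r m = ∑ i ∈ Finset.range m, κ (m - (1 + i)) * r ^ (1 + i) := by
    rw [logB, ← Finset.Ico_add_one_right_eq_Icc, Finset.sum_Ico_eq_sum_range, add_tsub_cancel_right]
  rw [hrange, hrange, Finset.sum_range_succ', mul_add, Finset.mul_sum]
  congr 1
  · refine Finset.sum_congr rfl fun i _ => ?_
    rw [show m + 1 - (1 + (i + 1)) = m - (1 + i) by omega]
    ring
  · simp [mul_comm]

theorem logB_nonneg (hκ : ∀ i, 0 ≤ κ i) (hr : 0 ≤ r) (m : ℕ) : 0 ≤ logB κ r m :=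
  Finset.sum_nonneg fun i _ => mul_nonneg (hκ _) (pow_nonneg hr i)

theorem one_le_Bconst (hκ : ∀ i, 0 ≤ κ i) (hr : 0 ≤ r) (m : ℕ) : 1 ≤ Bconst κ r m :=
  Real.one_le_exp (logB_nonneg hκ hr m)

theorem weight_cons_le {c : ℝ} (hφ : HolderOn (Sig W A k) r c 2 (φ k))
    (hy : y ∈ Sig W A (k + 1)) (hp : 1 ≤ p) (hxy : agrees x y p) (i : ℕ) :
    weight W A φ k (cons i x) ≤ Real.exp (c * r ^ (p + 1)) * weight W A φ k (cons i y) := by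
  by_cases hix : cons i x ∈ Sig W A k
  · have hiy := cons_mem_Sig_of_agrees hp hxy hix hy
    rw [weight_of_mem hix, weight_of_mem hiy, ← Real.exp_add, Real.exp_le_exp]
    linarith [(abs_le.1 (hφ (p + 1) (by omega) _ hix _ hiy (hxy.cons i))).2]
  · rw [weight_of_notMem hix]
    exact mul_nonneg (Real.exp_pos _).le (weight_nonneg k _)

-- `E = logB κ r (k + n) * r ^ p` is the accumulated distortion: `logB_succ` splits off the last of
-- the `n` branches, along which `x` and `y` agree one symbol longer.
theorem RuelleIter_le_exp_mul (hN : IsNormalized W A φ)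
    (hφ : ∀ k, HolderOn (Sig W A k) r (κ k) 2 (φ k)) (hκ : ∀ i, 0 ≤ κ i) (hr : 0 ≤ r) {a b c : ℝ}
    (hf : Set.MapsTo f (Sig W A k) (Set.Icc a b)) (hg : Set.MapsTo g (Sig W A k) (Set.Icc 0 c))
    (hp : 1 ≤ p) (hx : x ∈ Sig W A (k + n)) (hy : y ∈ Sig W A (k + n)) (hxy : agrees x y p)
    (hfg : ∀ z ∈ Sig W A k, ∀ z' ∈ Sig W A k, agrees z z' (p + n) → f z ≤ g z') :
    RuelleIter W A φ k n f x ≤ Real.exp (logB κ r (k + n) * r ^ p) * RuelleIter W A φ k n g y := by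
  induction n generalizing p x y with
  | zero =>
    refine (hfg x hx y hy hxy).trans (le_mul_of_one_le_left (hg hy).1 (Real.one_le_exp ?_))
    exact mul_nonneg (logB_nonneg hκ hr _) (pow_nonneg hr p)
  | succ n ih =>
    have hgn := hN.mapsTo_RuelleIter hg n
    refine hasSum_le (fun i => ?_) (hN.hasSum_Ruelle (hN.mapsTo_RuelleIter hf n) hx)
      ((hN.hasSum_Ruelle hgn hy).mul_left _)
    by_cases hix : cons i x ∈ Sig W A (k + n)
    swap
    · rw [weight_of_notMem hix, zero_mul]
      refine mul_nonneg (Real.exp_pos _).le ?_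
      simpa only [mul_zero] using weight_mul_le_weight_mul (fun z hz => (hgn hz).1) (cons i y)
    have hiy := cons_mem_Sig_of_agrees hp hxy hix hy
    set E := logB κ r (k + n) * r ^ (p + 1)
    calc weight W A φ (k + n) (cons i x) * RuelleIter W A φ k n f (cons i x)
        ≤ weight W A φ (k + n) (cons i x) *
            (Real.exp E * RuelleIter W A φ k n g (cons i y)) := by
          refine mul_le_mul_of_nonneg_left ?_ (weight_nonneg _ _)
          refine ih (by omega) hix hiy (hxy.cons i) fun z hz z' hz' hzz' => ?_
          exact hfg z hz z' hz' (by rwa [add_right_comm] at hzz')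
      _ ≤ Real.exp (κ (k + n) * r ^ (p + 1)) * weight W A φ (k + n) (cons i y) *
            (Real.exp E * RuelleIter W A φ k n g (cons i y)) :=
          mul_le_mul_of_nonneg_right (weight_cons_le (hφ _) hy hp hxy i)
            (mul_nonneg (Real.exp_pos _).le (hgn hiy).1)
      _ = Real.exp (logB κ r (k + (n + 1)) * r ^ p) *
            (weight W A φ (k + n) (cons i y) * RuelleIter W A φ k n g (cons i y)) := by
          have hE : logB κ r (k + (n + 1)) * r ^ p = κ (k + n) * r ^ (p + 1) + E := by
            rw [← add_assoc, logB_succ]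
            ring
          rw [hE, Real.exp_add]
          ring

theorem RuelleIter_le_of_holderOn (hN : IsNormalized W A φ)
    (hφ : ∀ k, HolderOn (Sig W A k) r (κ k) 2 (φ k)) (hκ : ∀ i, 0 ≤ κ i) (hr : 0 ≤ r) {c : ℝ}
    {q : ℕ} (hf : Set.MapsTo f (Sig W A k) (Set.Icc 0 D)) (hfc : HolderOn (Sig W A k) r c q f)
    (hq : q ≤ p + n) (hp : 1 ≤ p) (hx : x ∈ Sig W A (k + n)) (hy : y ∈ Sig W A (k + n))
    (hxy : agrees x y p) :
    RuelleIter W A φ k n f x ≤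
      Real.exp (logB κ r (k + n) * r ^ p) * RuelleIter W A φ k n f y + c * r ^ (p + n) := by
  set δ := c * r ^ (p + n)
  have hshift : Set.MapsTo (fun z => 1 * f z + -δ) (Sig W A k) (Set.Icc (-δ) (D + -δ)) :=
    fun z hz => ⟨by linarith [(hf hz).1], by linarith [(hf hz).2]⟩
  have hle := RuelleIter_le_exp_mul hN hφ hκ hr hshift hf hp hx hy hxy
    fun z hz z' hz' hzz' => by linarith [(abs_le.1 (hfc _ hq z hz z' hz' hzz')).2]
  rw [hN.RuelleIter_affine hf 1 (-δ) n hx] at hle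
  linarith

end Distortion

section Contraction

variable {W : ℕ → Set ℕ} {A : ℕ → ℕ → ℕ → Prop} {φ : ℕ → Seq → ℝ} {κ : ℕ → ℝ}
  {r α β C D t : ℝ} {k n m p : ℕ} {f : Seq → ℝ} {x y : Seq}

/-- Every `x ∈ Σ_{k+m}` has a preimage in `Σ_k` under `T^m` whose first letter does not depend on
`x` and whose weight `e^{S_m φ_k}` is at least `C`. Such branches come from the connecting words
`u(x)` in property `(H*)`. -/
def HasCommonBranch (W : ℕ → Set ℕ) (A : ℕ → ℕ → ℕ → Prop) (φ : ℕ → Seq → ℝ) (k m : ℕ) (C : ℝ) :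
    Prop :=
  ∃ o, ∀ x ∈ Sig W A (k + m), ∃ z ∈ Sig W A k,
    z 0 = o ∧ shift^[m] z = x ∧ C ≤ Real.exp (birkhoff φ k m z)

-- Doeblin's argument: a mass `C` is transported along branches starting with the same letter.
theorem RuelleIter_sub_le_of_hasCommonBranch (hN : IsNormalized W A φ)
    (hbranch : HasCommonBranch W A φ k m C) (hC : 0 ≤ C) {δ : ℝ}
    (hf : Set.MapsTo f (Sig W A k) (Set.Icc 0 D))
    (hδ : ∀ z ∈ Sig W A k, ∀ z' ∈ Sig W A k, z 0 = z' 0 → f z - f z' ≤ δ)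
    (hx : x ∈ Sig W A (k + m)) (hy : y ∈ Sig W A (k + m)) :
    RuelleIter W A φ k m f x - RuelleIter W A φ k m f y ≤ (1 - C) * D + C * δ := by
  obtain ⟨o, ho⟩ := hbranch
  obtain ⟨z, hz, hzo, rfl, hCz⟩ := ho x hx
  obtain ⟨z', hz', hzo', rfl, hCz'⟩ := ho y hy
  have hcompl : Set.MapsTo (fun w => -1 * f w + D) (Sig W A k) (Set.Icc 0 D) :=
    fun w hw => ⟨by linarith [(hf hw).2], by linarith [(hf hw).1]⟩
  have hupper := hN.exp_birkhoff_mul_le hcompl hz m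
  rw [hN.RuelleIter_affine hf (-1) D m hx] at hupper
  have hlower := hN.exp_birkhoff_mul_le hf hz' m
  have hCupper := mul_le_mul_of_nonneg_right hCz (hcompl hz).1
  have hClower := mul_le_mul_of_nonneg_right hCz' (hf hz').1
  have hCδ := mul_le_mul_of_nonneg_left (hδ z hz z' hz' (hzo.trans hzo'.symm)) hC
  linarith

theorem exp_mul_le_of_mem_Icc {d : ℝ} (hd : d ∈ Set.Icc (0 : ℝ) 1) (E : ℝ) :
    Real.exp (E * d) ≤ d * Real.exp E + (1 - d) := by
  simpa [mul_comm] using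
    convexOn_exp.2 (Set.mem_univ E) (Set.mem_univ 0) hd.1 (sub_nonneg.2 hd.2) (by ring)

theorem sub_le_of_le_mul_add {B q X Y : ℝ} (hB : 1 ≤ B) (hX : X ≤ D) (hXY : X ≤ B * Y + D * q) :
    X - Y ≤ D * (1 - (1 - q) / B) := by
  have hB₀ : 0 < B := zero_lt_one.trans_le hB
  have hmul : 0 ≤ (B - 1) * (D - X) := mul_nonneg (sub_nonneg.2 hB) (sub_nonneg.2 hX)
  rw [← mul_le_mul_iff_right₀ hB₀]
  have hrhs : B * (D * (1 - (1 - q) / B)) = D * (B - (1 - q)) := by field_simp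
  linarith

variable (hN : IsNormalized W A φ) (hφ : ∀ k, HolderOn (Sig W A k) r (κ k) 2 (φ k))
  (hκ : ∀ i, 0 ≤ κ i) (hr₀ : 0 ≤ r) (hr₁ : r ≤ 1) (hα : 0 ≤ α)

include hN hφ hκ hr₀ hr₁ hα

theorem RuelleIter_sub_le_of_agrees (hn : r ^ n * α ≤ 1) (hD : 0 ≤ D)
    (hf : Set.MapsTo f (Sig W A k) (Set.Icc 0 D))
    (hlip : LipOn (Sig W A k) (truncDist r α) D f) (hp : 1 ≤ p) (hx : x ∈ Sig W A (k + n))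
    (hy : y ∈ Sig W A (k + n)) (hxy : agrees x y p) :
    RuelleIter W A φ k n f x - RuelleIter W A φ k n f y ≤ D * (Bconst κ r (k + n) * r ^ p) := by
  have hle := RuelleIter_le_of_holderOn hN hφ hκ hr₀ hf (hlip.holderOn hr₀ hr₁ hα hD 0)
    (Nat.zero_le _) hp hx hy hxy
  obtain ⟨hY₀, hYD⟩ := hN.mapsTo_RuelleIter hf n hy
  set Y := RuelleIter W A φ k n f y
  have hd : r ^ p ∈ Set.Icc (0 : ℝ) 1 := ⟨pow_nonneg hr₀ p, pow_le_one₀ hr₀ hr₁⟩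
  have hB : 1 ≤ Bconst κ r (k + n) := one_le_Bconst hκ hr₀ _
  have hconvex : (Real.exp (logB κ r (k + n) * r ^ p) - 1) * Y ≤
      r ^ p * (Bconst κ r (k + n) - 1) * D := by
    refine mul_le_mul ?_ hYD hY₀ (mul_nonneg hd.1 (sub_nonneg.2 hB))
    have := exp_mul_le_of_mem_Icc hd (logB κ r (k + n))
    rw [Bconst]
    linarith
  have herror : D * α * r ^ (p + n) ≤ D * r ^ p :=
    calc D * α * r ^ (p + n) = D * r ^ p * (r ^ n * α) := by ring
      _ ≤ D * r ^ p := mul_le_of_le_one_right (mul_nonneg hD hd.1) hn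
  linarith

theorem RuelleIter_sub_le_of_apply_zero_eq (hD : 0 ≤ D)
    (hf : Set.MapsTo f (Sig W A k) (Set.Icc 0 D)) (hlip : LipOn (Sig W A k) (truncDist r α) D f)
    (hx : x ∈ Sig W A (k + n)) (hy : y ∈ Sig W A (k + n)) (hxy : x 0 = y 0) :
    RuelleIter W A φ k n f x - RuelleIter W A φ k n f y ≤
      D * (1 - (1 - r ^ n * α) / Bconst κ r (k + n)) := by
  have hagrees : agrees x y 1 := fun i hi => by rwa [Nat.lt_one_iff.1 hi]
  have hle := RuelleIter_le_of_holderOn hN hφ hκ hr₀ hf (hlip.holderOn hr₀ hr₁ hα hD 0)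
    (Nat.zero_le _) le_rfl hx hy hagrees
  refine sub_le_of_le_mul_add (one_le_Bconst hκ hr₀ _) (hN.mapsTo_RuelleIter hf n hx).2
    (hle.trans (add_le_add ?_ ?_))
  · refine mul_le_mul_of_nonneg_right (Real.exp_le_exp.2 ?_) (hN.mapsTo_RuelleIter hf n hy).1
    simpa only [pow_one] using mul_le_of_le_one_right (logB_nonneg hκ hr₀ (k + n)) hr₁
  · calc D * α * r ^ (1 + n) = D * (r ^ n * α) * r := by ring
      _ ≤ D * (r ^ n * α) := mul_le_of_le_one_right (by positivity) hr₁

theorem RuelleIter_add_sub_le (hD : 0 ≤ D) (hf : Set.MapsTo f (Sig W A k) (Set.Icc 0 D))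
    (hlip : LipOn (Sig W A k) (truncDist r α) D f) (hC : 0 ≤ C)
    (hbranch : HasCommonBranch W A φ (k + n) m C) (hx : x ∈ Sig W A (k + (n + m)))
    (hy : y ∈ Sig W A (k + (n + m))) :
    RuelleIter W A φ k (n + m) f x - RuelleIter W A φ k (n + m) f y ≤
      D * (1 - (1 - r ^ n * α) * C / Bconst κ r (k + n)) := by
  rw [← add_assoc] at hx hy
  rw [RuelleIter_add]
  refine (RuelleIter_sub_le_of_hasCommonBranch hN hbranch hC (hN.mapsTo_RuelleIter hf n)
    (fun z hz z' hz' => RuelleIter_sub_le_of_apply_zero_eq hN hφ hκ hr₀ hr₁ hα hD hf hlip hz hz')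
    hx hy).trans_eq ?_
  ring

omit hα in
theorem lipOn_RuelleIter_add (hβ : 0 < β) (hβt : β ≤ t) (ht : t ≤ 1)
    (hn : r ^ n * (Bconst κ r k / β) ≤ 1) (hC : 0 ≤ C)
    (hbranch : HasCommonBranch W A φ (k + n) m C)
    (hst : 1 - (1 - r ^ n * (Bconst κ r k / β)) * C / Bconst κ r (k + n) ≤ t) (hD : 0 ≤ D)
    (hf : LipOn (Sig W A k) (truncDist r (Bconst κ r k / β)) D f) :
    LipOn (Sig W A (k + (n + m))) (truncDist r (Bconst κ r (k + (n + m)) / β)) (t * D)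
      (RuelleIter W A φ k (n + m) f) := by
  have hβ₁ : β ≤ 1 := hβt.trans ht
  have hα (j : ℕ) : 1 ≤ Bconst κ r j / β :=
    (one_le_div hβ).2 (hβ₁.trans (one_le_Bconst hκ hr₀ j))
  have hα₀ := zero_le_one.trans (hα k)
  obtain ⟨c, hc⟩ := hf.exists_mapsTo_Icc (truncDist_le_one r _) hD
  have hshift : Set.MapsTo (fun x => f x - c) (Sig W A k) (Set.Icc 0 D) :=
    fun x hx => ⟨sub_nonneg.2 (hc hx).1, sub_le_iff_le_add'.2 (hc hx).2⟩
  have hlip := hf.sub_const c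
  have hiter : Set.EqOn (RuelleIter W A φ k (n + m) f)
      (fun x => RuelleIter W A φ k (n + m) (fun z => f z - c) x + c) (Sig W A (k + (n + m))) := by
    simpa only [one_mul, sub_add_cancel] using hN.RuelleIter_affine hshift 1 c (n + m)
  refine lipOn_truncDist_of_sub_le hr₀ (hα _) (mul_nonneg (hβ.le.trans hβt) hD) ?_ ?_
  · intro x hx y hy
    rw [hiter hx, hiter hy, add_sub_add_right_eq_sub, mul_comm]
    exact (RuelleIter_add_sub_le hN hφ hκ hr₀ hr₁ hα₀ hD hshift hlip hC hbranch hx hy).trans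
      (mul_le_mul_of_nonneg_left hst hD)
  · intro p hp x hx y hy hxy
    have hnm : r ^ (n + m) * (Bconst κ r k / β) ≤ 1 :=
      (mul_le_mul_of_nonneg_right (pow_le_pow_of_le_one hr₀ hr₁ (Nat.le_add_right n m)) hα₀).trans
        hn
    rw [hiter hx, hiter hy, add_sub_add_right_eq_sub]
    calc _ ≤ D * (Bconst κ r (k + (n + m)) * r ^ p) :=
          RuelleIter_sub_le_of_agrees hN hφ hκ hr₀ hr₁ hα₀ hnm hD hshift hlip hp hx hy hxy
      _ = β * D * (Bconst κ r (k + (n + m)) / β * r ^ p) := by field_simp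
      _ ≤ t * D * (Bconst κ r (k + (n + m)) / β * r ^ p) :=
          mul_le_mul_of_nonneg_right (mul_le_mul_of_nonneg_right hβt hD)
            (mul_nonneg (zero_le_one.trans (hα _)) (pow_nonneg hr₀ p))

end Contraction

section Duality

variable {W : ℕ → Set ℕ} {A : ℕ → ℕ → ℕ → Prop} {φ : ℕ → Seq → ℝ} {k : ℕ} {f : Seq → ℝ}

theorem measurable_cons (i : ℕ) : Measurable (cons i) := by
  refine measurable_pi_iff.2 fun j => ?_
  cases j with
  | zero => exact measurable_const
  | succ j => exact measurable_pi_apply j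

theorem measurableSet_Sig (W : ℕ → Set ℕ) (A : ℕ → ℕ → ℕ → Prop) (k : ℕ) :
    MeasurableSet (Sig W A k) := by
  simp only [Sig, Set.ofPred_and, Set.ofPred_forall]
  refine (MeasurableSet.iInter fun i => ?_).inter (MeasurableSet.iInter fun i => ?_)
  · exact measurable_pi_apply i (MeasurableSet.of_discrete (s := W (k + i)))
  · have hpair : Measurable fun x : Seq => (x i, x (i + 1)) :=
      (measurable_pi_apply i).prodMk (measurable_pi_apply (i + 1))
    exact hpair (MeasurableSet.of_discrete (s := {q | A (k + i) q.1 q.2}))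

theorem measurable_weight (hφ : ContinuousOn (φ k) (Sig W A k)) :
    Measurable (weight W A φ k) := by
  classical
  rw [weight, ← Set.piecewise_eq_indicator]
  exact (Real.continuous_exp.comp_continuousOn hφ).measurable_piecewise continuousOn_const
    (measurableSet_Sig W A k)

theorem measurable_Ruelle (hw : Measurable (weight W A φ k)) (hf : Measurable f) :
    Measurable (Ruelle W A φ k f) := by
  simp only [funext (Ruelle_eq_tsum_weight k f)]
  exact Measurable.tsum fun i =>
    (hw.comp (measurable_cons i)).mul (hf.comp (measurable_cons i))

theorem measurable_RuelleIter (hw : ∀ k, Measurable (weight W A φ k)) (hf : Measurable f)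
    (n : ℕ) : Measurable (RuelleIter W A φ k n f) := by
  induction n with
  | zero => exact hf
  | succ n ih => exact measurable_Ruelle (hw _) ih

/-- The contribution of the inverse branch `x ↦ ix` to the dual operator `ℒ*_k`. -/
noncomputable def dualBranch (W : ℕ → Set ℕ) (A : ℕ → ℕ → ℕ → Prop) (φ : ℕ → Seq → ℝ) (k i : ℕ)
    (μ : Measure Seq) : Measure Seq :=
  (μ.withDensity fun x => ENNReal.ofReal (weight W A φ k (cons i x))).map (cons i)

theorem dualRuelle_eq_sum_dualBranch (k : ℕ) (μ : Measure Seq) :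
    dualRuelle W A φ k μ = Measure.sum fun i => dualBranch W A φ k i μ :=
  rfl

variable (hw : Measurable (weight W A φ k)) {μ : Measure Seq}

include hw

theorem measurable_ofReal_weight_cons (i : ℕ) :
    Measurable fun x => ENNReal.ofReal (weight W A φ k (cons i x)) :=
  (hw.comp (measurable_cons i)).ennreal_ofReal

theorem integrable_dualBranch_iff {i : ℕ}
    (hf : AEStronglyMeasurable f (dualBranch W A φ k i μ)) :
    Integrable f (dualBranch W A φ k i μ) ↔
      Integrable (fun x => weight W A φ k (cons i x) * f (cons i x)) μ := by
  rw [dualBranch, integrable_map_measure hf (measurable_cons i).aemeasurable,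
    integrable_withDensity_iff_integrable_smul' (measurable_ofReal_weight_cons hw i)
      (ae_of_all _ fun _ => ENNReal.ofReal_lt_top)]
  simp only [ENNReal.toReal_ofReal (weight_nonneg k _), smul_eq_mul, Function.comp_apply]

theorem integral_dualBranch {i : ℕ} (hf : AEStronglyMeasurable f (dualBranch W A φ k i μ)) :
    ∫ x, f x ∂dualBranch W A φ k i μ = ∫ x, weight W A φ k (cons i x) * f (cons i x) ∂μ := by
  rw [dualBranch, integral_map (measurable_cons i).aemeasurable hf,
    integral_withDensity_eq_integral_toReal_smul (measurable_ofReal_weight_cons hw i)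
      (ae_of_all _ fun _ => ENNReal.ofReal_lt_top)]
  simp only [ENNReal.toReal_ofReal (weight_nonneg k _), smul_eq_mul]

theorem integral_dualRuelle (hf : Integrable f (dualRuelle W A φ k μ)) :
    ∫ x, f x ∂dualRuelle W A φ k μ = ∫ x, Ruelle W A φ k f x ∂μ := by
  rw [dualRuelle_eq_sum_dualBranch] at hf ⊢
  have hbranch (i : ℕ) : Integrable f (dualBranch W A φ k i μ) :=
    hf.mono_measure (Measure.le_sum _ i)
  have hsummable : Summable fun i =>
      ∫ x, ‖weight W A φ k (cons i x) * f (cons i x)‖ ∂μ := by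
    refine (hasSum_integral_measure hf.norm).summable.congr fun i => ?_
    rw [integral_dualBranch hw (hbranch i).norm.1]
    simp only [norm_mul, Real.norm_of_nonneg (weight_nonneg k _)]
  simp only [Ruelle_eq_tsum_weight]
  rw [← (hasSum_integral_measure hf).tsum_eq, ← integral_tsum_of_summable_integral_norm
    (fun i => (integrable_dualBranch_iff hw (hbranch i).1).1 (hbranch i)) hsummable]
  exact tsum_congr fun i => integral_dualBranch hw (hbranch i).1

theorem ae_mem_Sig_dualRuelle (μ : Measure Seq) :
    ∀ᵐ x ∂dualRuelle W A φ k μ, x ∈ Sig W A k := by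
  rw [dualRuelle_eq_sum_dualBranch, Measure.ae_sum_iff]
  intro i
  rw [dualBranch, ae_map_iff (p := (· ∈ Sig W A k)) (measurable_cons i).aemeasurable
    (measurableSet_Sig W A k), ae_withDensity_iff (measurable_ofReal_weight_cons hw i)]
  refine ae_of_all _ fun x hx => ?_
  contrapose! hx
  rw [weight_of_notMem hx, ENNReal.ofReal_zero]

end Duality

section Uniqueness

variable {W : ℕ → Set ℕ} {A : ℕ → ℕ → ℕ → Prop} {φ : ℕ → Seq → ℝ} {μ ν : ℕ → Measure Seq}

/-- From every time `k`, some iterate `ℒ^l_k` multiplies Lipschitz constants for the costs `d` by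
`t`. -/
def IsLipContracting (W : ℕ → Set ℕ) (A : ℕ → ℕ → ℕ → Prop) (φ : ℕ → Seq → ℝ)
    (d : ℕ → Seq → Seq → ℝ) (t : ℝ) : Prop :=
  ∀ k, ∃ l, ∀ D f, 0 ≤ D → LipOn (Sig W A k) (d k) D f →
    LipOn (Sig W A (k + l)) (d (k + l)) (t * D) (RuelleIter W A φ k l f)

/-- An invariant sequence: Borel probability measures with `ℒ*_k(μ_{k+1}) = μ_k` for all `k`. -/
structure IsInvariantSequence (W : ℕ → Set ℕ) (A : ℕ → ℕ → ℕ → Prop) (φ : ℕ → Seq → ℝ)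
    (μ : ℕ → Measure Seq) : Prop where
  isProbabilityMeasure (k : ℕ) : IsProbabilityMeasure (μ k)
  dualRuelle_eq (k : ℕ) : dualRuelle W A φ k (μ (k + 1)) = μ k

namespace IsInvariantSequence

variable (hμ : IsInvariantSequence W A φ μ) (hν : IsInvariantSequence W A φ ν)
  (hw : ∀ k, Measurable (weight W A φ k)) {k : ℕ} {f : Seq → ℝ} {a b D t : ℝ}

include hμ hw

theorem ae_mem_Icc (hf : Set.MapsTo f (Sig W A k) (Set.Icc a b)) :
    ∀ᵐ x ∂μ k, f x ∈ Set.Icc a b := by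
  rw [← hμ.dualRuelle_eq k]
  exact (ae_mem_Sig_dualRuelle (hw k) _).mono hf

theorem integrable (hfm : Measurable f) (hf : Set.MapsTo f (Sig W A k) (Set.Icc a b)) :
    Integrable f (μ k) :=
  have := hμ.isProbabilityMeasure k
  .of_mem_Icc a b hfm.aemeasurable (hμ.ae_mem_Icc hw hf)

theorem integral_mem_Icc (hfm : Measurable f) (hf : Set.MapsTo f (Sig W A k) (Set.Icc a b)) :
    ∫ x, f x ∂μ k ∈ Set.Icc a b :=
  have := hμ.isProbabilityMeasure k
  (convex_Icc a b).integral_mem isClosed_Icc (hμ.ae_mem_Icc hw hf) (hμ.integrable hw hfm hf)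

theorem integral_RuelleIter (hN : IsNormalized W A φ) (hfm : Measurable f)
    (hf : Set.MapsTo f (Sig W A k) (Set.Icc a b)) (n : ℕ) :
    ∫ x, RuelleIter W A φ k n f x ∂μ (k + n) = ∫ x, f x ∂μ k := by
  induction n with
  | zero => rfl
  | succ n ih =>
    have hint := hμ.integrable hw (measurable_RuelleIter hw hfm n) (hN.mapsTo_RuelleIter hf n)
    rw [← hμ.dualRuelle_eq (k + n)] at hint ih
    rw [← ih, integral_dualRuelle (hw _) hint]
    rfl

include hν

theorem integral_sub_le (hN : IsNormalized W A φ) {d : ℕ → Seq → Seq → ℝ}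
    (hd : ∀ k x y, d k x y ≤ 1) (ht : 0 ≤ t) (hcontract : IsLipContracting W A φ d t)
    (hfm : Measurable f) (hD : 0 ≤ D) (hf : LipOn (Sig W A k) (d k) D f) (j : ℕ) :
    ∫ x, f x ∂μ k - ∫ x, f x ∂ν k ≤ t ^ j * D := by
  induction j generalizing k f D with
  | zero =>
    obtain ⟨c, hc⟩ := hf.exists_mapsTo_Icc (hd k) hD
    linarith [(hμ.integral_mem_Icc hw hfm hc).2, (hν.integral_mem_Icc hw hfm hc).1]
  | succ j ih =>
    obtain ⟨c, hc⟩ := hf.exists_mapsTo_Icc (hd k) hD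
    obtain ⟨l, hl⟩ := hcontract k
    rw [← hμ.integral_RuelleIter hw hN hfm hc l, ← hν.integral_RuelleIter hw hN hfm hc l, pow_succ,
      mul_assoc]
    exact ih (measurable_RuelleIter hw hfm l) (mul_nonneg ht hD) (hl D f hD hf)

theorem integral_eq (hN : IsNormalized W A φ) {d : ℕ → Seq → Seq → ℝ}
    (hd : ∀ k x y, d k x y ≤ 1) (ht₀ : 0 ≤ t) (ht₁ : t < 1)
    (hcontract : IsLipContracting W A φ d t)
    (hfm : Measurable f) (hD : 0 ≤ D) (hf : LipOn (Sig W A k) (d k) D f) :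
    ∫ x, f x ∂μ k = ∫ x, f x ∂ν k := by
  have hlim : Tendsto (fun j : ℕ => t ^ j * D) atTop (𝓝 0) := by
    simpa only [zero_mul] using (tendsto_pow_atTop_nhds_zero_of_lt_one ht₀ ht₁).mul_const D
  refine le_antisymm (sub_nonpos.1 ?_) (sub_nonpos.1 ?_)
  · exact ge_of_tendsto' hlim (hμ.integral_sub_le hν hw hN hd ht₀ hcontract hfm hD hf)
  · exact ge_of_tendsto' hlim (hν.integral_sub_le hμ hw hN hd ht₀ hcontract hfm hD hf)

end IsInvariantSequence

theorem measure_ext_of_integral_eq {μ ν : Measure Seq} [IsProbabilityMeasure μ]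
    [IsProbabilityMeasure ν] {r : ℝ} (hr₀ : 0 < r) (hr₁ : r ≤ 1) {S : Set Seq} {α : ℝ}
    (hα : 1 ≤ α) (h : ∀ f D, Measurable f → 0 ≤ D → LipOn S (truncDist r α) D f →
      ∫ x, f x ∂μ = ∫ x, f x ∂ν) : μ = ν := by
  refine ext_of_generate_finite _ generateFrom_measurableCylinders.symm
    isPiSystem_measurableCylinders (fun Z hZ => ?_) (by simp only [measure_univ])
  have hZm : MeasurableSet Z := .of_mem_measurableCylinders hZ
  simp only [measurableCylinders_nat, Set.mem_iUnion, Set.mem_singleton_iff] at hZ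
  obtain ⟨p, B, -, rfl⟩ := hZ
  set f : Seq → ℝ := (cylinder (Finset.Iic p) B).indicator 1
  have hdep (x y : Seq) (hxy : agrees x y (p + 1)) : f x = f y :=
    dependsOn_cylinder_indicator_const B 1 fun i hi =>
      hxy i (Nat.lt_succ_of_le (Finset.mem_Iic.1 hi))
  have hosc (x y : Seq) : f x - f y ≤ 1 := by
    have hx : f x ≤ 1 := Set.indicator_le_self' (fun _ _ => zero_le_one) x
    have hy : 0 ≤ f y := Set.indicator_nonneg (fun _ _ => zero_le_one) y
    linarith
  have hint := h f _ (measurable_one.indicator hZm) (by positivity)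
    (lipOn_truncDist_of_agrees hr₀ hr₁ hα hdep hosc S)
  rw [integral_indicator_one hZm, integral_indicator_one hZm] at hint
  exact (measureReal_eq_measureReal_iff).1 hint

theorem invariant_sequence_unique_general {κ : ℕ → ℝ} {r β t : ℝ} {n m : ℕ → ℕ} {C : ℕ → ℝ}
    (hr₀ : 0 < r) (hr₁ : r < 1) (hβ : 0 < β) (hκ : ∀ i, 0 ≤ κ i) (hN : IsNormalized W A φ)
    (hφ : ∀ k, HolderOn (Sig W A k) r (κ k) 2 (φ k))
    (hn : ∀ k, r ^ n k * (Bconst κ r k / β) ≤ 1) (hC : ∀ k, 0 ≤ C k)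
    (hbranch : ∀ k, HasCommonBranch W A φ k (m k) (C k)) (hβt : β ≤ t) (ht : t < 1)
    (hst : ∀ k, 1 - (1 - r ^ n k * (Bconst κ r k / β)) * C (k + n k) / Bconst κ r (k + n k) ≤ t)
    (hμ : IsInvariantSequence W A φ μ) (hν : IsInvariantSequence W A φ ν) (k : ℕ) :
    μ k = ν k := by
  have hw (k : ℕ) : Measurable (weight W A φ k) :=
    measurable_weight ((hφ k).continuousOn hr₀.le hr₁)
  have hα : 1 ≤ Bconst κ r k / β :=
    (one_le_div hβ).2 ((hβt.trans ht.le).trans (one_le_Bconst hκ hr₀.le k))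
  have hcontract : IsLipContracting W A φ (fun k => truncDist r (Bconst κ r k / β)) t :=
    fun j => ⟨n j + m (j + n j), fun _ _ => lipOn_RuelleIter_add hN hφ hκ hr₀.le hr₁.le hβ hβt
      ht.le (hn j) (hC _) (hbranch _) (hst j)⟩
  have := hμ.isProbabilityMeasure k
  have := hν.isProbabilityMeasure k
  exact measure_ext_of_integral_eq hr₀ hr₁.le (S := Sig W A k) hα fun f D hfm hD hf =>
    hμ.integral_eq hν hw hN (fun k => truncDist_le_one r _) (hβ.le.trans hβt) ht hcontract hfm hD hf

end Uniqueness

namespace HstarSystem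

variable (S : HstarSystem)

theorem holderOn_two (k : ℕ) : HolderOn (Sig S.W S.A k) S.r (S.κ k) 2 (S.φ k) := by
  by_cases hk : k ∈ S.K
  · exact fun p hp => S.holder1 k hk p (one_le_two.trans hp)
  · exact S.holder2 k hk

theorem hasCommonBranch (k : ℕ) :
    HasCommonBranch S.W S.A S.φ k (S.mseq k) (S.Cseq k) := by
  refine ⟨S.o k, fun x hx => ?_⟩
  obtain ⟨hmem, hzero, -⟩ := S.hu k x hx
  refine ⟨prepend (S.u k x) (S.mseq k) x, hmem, ?_, iterate_shift_prepend _ _ x, S.hC_le k x hx⟩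
  exact (if_pos (S.hm_mem k).1).trans hzero

theorem pow_nseq_mul_alphaC_lt_one (k : ℕ) : S.r ^ S.nseq k * S.alphaC k < 1 := by
  have hα : 0 < S.alphaC k := div_pos (Real.exp_pos _) S.hβ.1
  have hrn : 0 < S.r ^ S.nseq k := pow_pos S.hr.1 _
  have hfloor : -Real.log (S.alphaC k) / Real.log S.r < S.nseq k := by
    exact_mod_cast Int.floor_lt.1 (Int.lt_of_add_one_le (S.hn k))
  rw [div_lt_iff_of_neg (Real.log_neg S.hr.1 S.hr.2)] at hfloor
  rw [← Real.log_neg_iff (mul_pos hrn hα), Real.log_mul hrn.ne' hα.ne', Real.log_pow]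
  linarith

end HstarSystem

/-- (Corollary, uniqueness.) Under property `(H*)`, if the `n_k` are chosen so
that `sup_k t_k < 1`, then an invariant sequence of Borel probability measures
(`ℒ^*_k(μ_{k+1}) = μ_k` for all `k`) is unique. -/
theorem invariant_sequence_unique (S : HstarSystem)
    (ht : ∃ t : ℝ, t < 1 ∧ ∀ k, S.tconst k ≤ t)
    (μ ν : ℕ → Measure Seq)
    (hμp : ∀ k, IsProbabilityMeasure (μ k)) (hμs : ∀ k, μ k (Sig S.W S.A k) = 1)
    (hνp : ∀ k, IsProbabilityMeasure (ν k)) (hνs : ∀ k, ν k (Sig S.W S.A k) = 1)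
    (hμinv : ∀ k, dualRuelle S.W S.A S.φ k (μ (k + 1)) = μ k)
    (hνinv : ∀ k, dualRuelle S.W S.A S.φ k (ν (k + 1)) = ν k) :
    ∀ k, μ k = ν k := by
  obtain ⟨t, ht₁, ht⟩ := ht
  exact invariant_sequence_unique_general S.hr.1 S.hr.2 S.hβ.1 S.κnonneg S.normalized
    S.holderOn_two (fun k => (S.pow_nseq_mul_alphaC_lt_one k).le) (fun k => (S.hC_pos k).le)
    S.hasCommonBranch ((le_max_left _ _).trans (ht 0)) ht₁
    (fun k => (le_max_right _ _).trans (ht k)) ⟨hμp, hμinv⟩ ⟨hνp, hνinv⟩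

end NSShift
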